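/- The family γ = (γ_n) is a chain map from the birack chain complex with X-set X, C^{BR}_*(X;ℤ)_X, to C^{BR_U}_*(X;ℤ)_X, i.e. γ_{n−1} ∘ ∂^{BR}_n = ∂^{BR_U}_n ∘ γ_n for every integer n, and each γ_n is an isomorphism of abelian groups. -/

import Mathlib

open FreeAbelianGroup
open scoped TensorProduct

namespace GAlex

variable {G M A : Type*} [Group G] [AddCommGroup M] [DistribMulAction Gᵐᵒᵖ M] [AddCommGroup A]

/-- The right action `m · g` of a group element `g : G` on `m : M`
(coming from the right `ℤ[G]`-module structure on `M`). -/
def ract (m : M) (g : G) : M := MulOpposite.op g • m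

variable (φ : G →* G)

/-- The operation `(m,g) ⊳ (n,h) = (mh + n(φ(h) − h), h⁻¹gh)` of the `G`-Alexander biquandle. -/
def under (x y : M × G) : M × G :=
  (ract x.1 y.2 + ract y.1 (φ y.2) - ract y.1 y.2, y.2⁻¹ * x.2 * y.2)

/-- The operation `(m,g) ⊚ (n,h) = (mφ(h), g)` of the `G`-Alexander biquandle. -/
def overOp (x y : M × G) : M × G := (ract x.1 (φ y.2), x.2)

/-- The face `g_{⟨p⟩}` (delete the `p`-th entry). -/
def dGdel (n : ℕ) (p : Fin (n + 1)) (g : Fin (n + 1) → G) : Fin n → G :=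
  fun j => g (p.succAbove j)

/-- The face `g_{⟨⊲p⟩}` (conjugate the first entries by `g p` and delete the `p`-th entry). -/
def dGconj (n : ℕ) (p : Fin (n + 1)) (g : Fin (n + 1) → G) : Fin n → G :=
  fun j => if (j : ℕ) < (p : ℕ) then (g p)⁻¹ * g j.castSucc * g p else g j.succ

/-- The face `m_{⟨p⟩}` (merge the two entries adjacent to position `p`;
for `p = 0` drop the first entry). -/
def dMmer (n : ℕ) (p : Fin (n + 1)) (m : Fin (n + 1) → M) : Fin n → M :=
  fun j =>
    if (j : ℕ) + 1 < (p : ℕ) then m j.castSucc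
    else if (j : ℕ) + 1 = (p : ℕ) then m j.castSucc + m j.succ
    else m j.succ

/-- The face `m_{⟨⊲p⟩}`. -/
def dMconj (n : ℕ) (p : Fin (n + 1)) (g : Fin (n + 1) → G) (m : Fin (n + 1) → M) : Fin n → M :=
  fun j =>
    if (j : ℕ) + 1 < (p : ℕ) then ract (m j.castSucc) (g p)
    else if (j : ℕ) + 1 = (p : ℕ) then ract (m j.castSucc) (g p) + ract (m j.succ) (φ (g p))
    else ract (m j.succ) (φ (g p))

/-- The boundary map `∂^{BR_U}_{n+1} : C^{BR_U}_{n+1}(X;ℤ) → C^{BR_U}_n(X;ℤ)`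
(the boundary `∂^{BR_U}_k` is `0` for `k ≤ 1`, which agrees with this formula at `n = 0`). -/
def dBRU (n : ℕ) :
    FreeAbelianGroup ((Fin (n + 1) → G) × (Fin (n + 1) → M)) →+
      FreeAbelianGroup ((Fin n → G) × (Fin n → M)) :=
  FreeAbelianGroup.lift fun x =>
    ∑ p : Fin (n + 1),
      (-1 : ℤ) ^ (p : ℕ) •
        (FreeAbelianGroup.of (dGdel n p x.1, dMmer n p x.2) -
          FreeAbelianGroup.of (dGconj n p x.1, dMconj φ n p x.1 x.2))

/-- The birack boundary map `∂^{BR}_{n+1} : C^{BR}_{n+1}(X;ℤ) → C^{BR}_n(X;ℤ)`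
for the `G`-Alexander biquandle `X = M × G` (with trivial `X`-set). -/
def dBR (n : ℕ) :
    FreeAbelianGroup (Fin (n + 1) → M × G) →+ FreeAbelianGroup (Fin n → M × G) :=
  FreeAbelianGroup.lift fun x =>
    ∑ p : Fin (n + 1),
      (-1 : ℤ) ^ (p : ℕ) •
        (FreeAbelianGroup.of (fun j => x (p.succAbove j)) -
          FreeAbelianGroup.of (fun j : Fin n =>
            if (j : ℕ) < (p : ℕ) then under φ (x j.castSucc) (x p)
            else overOp φ (x j.succ) (x p)))

/-- `γ_n((m₁,g₁),…,(m_n,g_n)) = (g₁,…,g_n; m₁−m₂, …, m_{n−1}−m_n, m_n)`. -/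
def gammaMap (n : ℕ) :
    FreeAbelianGroup (Fin n → M × G) →+ FreeAbelianGroup ((Fin n → G) × (Fin n → M)) :=
  FreeAbelianGroup.lift fun x =>
    FreeAbelianGroup.of
      (fun j => (x j).2,
       fun j => (x j).1 - if h : (j : ℕ) + 1 < n then (x ⟨(j : ℕ) + 1, h⟩).1 else 0)

/-- `r_n(g₁,…,g_n; m₁,…,m_n) = ((m₁+⋯+m_n, g₁), (m₂+⋯+m_n, g₂), …, (m_n, g_n))`. -/
def rMap (n : ℕ) :
    FreeAbelianGroup ((Fin n → G) × (Fin n → M)) →+ FreeAbelianGroup (Fin n → M × G) :=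
  FreeAbelianGroup.lift fun p =>
    FreeAbelianGroup.of fun j => ((∑ i ∈ Finset.Ici j, p.2 i), p.1 j)

/-- The boundary map `∂^{BR_U}_{d+1}` of `C^{BR_U}_*(X;ℤ)_X` (the version with `X`-set `X`,
whose degree-`d` chain group is free on `(1+d)`-tuples); it is `0` in degrees `≤ 1`. -/
def dBRUX : (d : ℕ) →
    FreeAbelianGroup ((Fin (d + 2) → G) × (Fin (d + 2) → M)) →+
      FreeAbelianGroup ((Fin (d + 1) → G) × (Fin (d + 1) → M))
  | 0 => 0
  | d + 1 =>
    FreeAbelianGroup.lift fun x =>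
      ∑ i : Fin (d + 2),
        (-1 : ℤ) ^ (i : ℕ) •
          (FreeAbelianGroup.of (dGdel (d + 2) i.succ x.1, dMmer (d + 2) i.succ x.2) -
            FreeAbelianGroup.of (dGconj (d + 2) i.succ x.1, dMconj φ (d + 2) i.succ x.1 x.2))

/-- The boundary map `∂^{BR}_{d+1}` of `C^{BR}_*(X;ℤ)_X` (the version with `X`-set `X`);
it is `0` in degrees `≤ 1`. -/
def dBRX : (d : ℕ) →
    FreeAbelianGroup (Fin (d + 2) → M × G) →+ FreeAbelianGroup (Fin (d + 1) → M × G)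
  | 0 => 0
  | d + 1 =>
    FreeAbelianGroup.lift fun x =>
      ∑ i : Fin (d + 2),
        (-1 : ℤ) ^ (i : ℕ) •
          (FreeAbelianGroup.of (fun j => x (i.succ.succAbove j)) -
            FreeAbelianGroup.of (fun j : Fin (d + 2) =>
              if (j : ℕ) < (i : ℕ) + 1 then under φ (x j.castSucc) (x i.succ)
              else overOp φ (x j.succ) (x i.succ)))


theorem sum_Ici_step (n : ℕ) (f : Fin n → M) (j : Fin n) :
    ∑ i ∈ Finset.Ici j, f i =
      f j + if h : (j : ℕ) + 1 < n then ∑ i ∈ Finset.Ici (⟨(j : ℕ) + 1, h⟩ : Fin n), f i else 0 := by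
  have h1 : Finset.Ici j = insert j (Finset.Ioi j) := by
    ext i; simp only [Finset.mem_Ici, Finset.mem_insert, Finset.mem_Ioi, Fin.le_def, Fin.lt_def,
      Fin.ext_iff]; omega
  rw [h1, Finset.sum_insert (by simp)]
  congr 1
  split_ifs with h
  · congr 1
    ext i; simp only [Finset.mem_Ici, Finset.mem_Ioi, Fin.le_def, Fin.lt_def]; omega
  · have : Finset.Ioi j = ∅ := by
      ext i
      have := i.2
      simp only [Finset.mem_Ioi, Fin.lt_def, Finset.notMem_empty, iff_false]; omega
    simp [this]

theorem sum_tele (n : ℕ) (x : Fin n → M) : ∀ (k : ℕ) (j : Fin n), n - (j : ℕ) = k →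
    ∑ i ∈ Finset.Ici j, (x i - if h : (i : ℕ) + 1 < n then x ⟨(i : ℕ) + 1, h⟩ else 0) = x j := by
  intro k
  induction k with
  | zero => intro j hj; have := j.2; omega
  | succ k ih =>
    intro j hj
    rw [sum_Ici_step]
    split_ifs with h
    · rw [ih ⟨(j : ℕ) + 1, h⟩ (by simp only []; omega)]; abel
    · abel

theorem gamma_bij (n : ℕ) : Function.Bijective (gammaMap (G := G) (M := M) n) := by
  rw [Function.bijective_iff_has_inverse]
  refine ⟨rMap n, ?_, ?_⟩
  · intro a
    have : (rMap n).comp (gammaMap (G := G) (M := M) n) = AddMonoidHom.id _ := by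
      apply FreeAbelianGroup.lift_ext
      intro x
      simp only [AddMonoidHom.comp_apply, gammaMap, rMap, FreeAbelianGroup.lift_apply_of,
        AddMonoidHom.id_apply]
      congr 1
      funext j
      exact Prod.ext (sum_tele n (fun i => (x i).1) _ j rfl) rfl
    exact DFunLike.congr_fun this a
  · intro a
    have : (gammaMap (G := G) (M := M) n).comp (rMap n) = AddMonoidHom.id _ := by
      apply FreeAbelianGroup.lift_ext
      intro x
      simp only [AddMonoidHom.comp_apply, gammaMap, rMap, FreeAbelianGroup.lift_apply_of,
        AddMonoidHom.id_apply]
      congr 1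
      refine Prod.ext rfl ?_
      funext j
      simp only []
      rw [sum_Ici_step]
      abel
    exact DFunLike.congr_fun this a

theorem ract_add (a b : M) (g : G) : ract (a + b) g = ract a g + ract b g := smul_add _ _ _
theorem ract_sub (a b : M) (g : G) : ract (a - b) g = ract a g - ract b g := smul_sub _ _ _
theorem ract_zero (g : G) : ract (0 : M) g = 0 := smul_zero _

theorem face1 (n : ℕ) (p : Fin (n + 1)) (x : Fin (n + 1) → M) (j : Fin n) :
    (x (p.succAbove j) - if h : (j : ℕ) + 1 < n then x (p.succAbove ⟨(j : ℕ) + 1, h⟩) else 0) =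
    dMmer n p (fun j => x j - if h : (j : ℕ) + 1 < n + 1 then x ⟨(j : ℕ) + 1, h⟩ else 0) j := by
  have hj := j.2
  have hp := p.2
  have key : ∀ (a : ℕ) (ha : a < n), x (p.succAbove ⟨a, ha⟩) =
      if a < (p : ℕ) then x ⟨a, by omega⟩ else x ⟨a + 1, by omega⟩ := by
    intro a ha
    simp only [Fin.succAbove, Fin.lt_def]
    split_ifs <;> simp_all
  have k1 := key j hj
  simp only [Fin.eta] at k1
  simp only [dMmer, k1, key, Fin.val_castSucc, Fin.val_succ, Fin.castSucc, Fin.succ]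
  obtain ⟨j, hj'⟩ := j
  obtain ⟨p, hp'⟩ := p
  simp only at *
  by_cases h1 : j + 1 < p
  · have h2 : j < p := by omega
    have h3 : j + 1 < n := by omega
    simp [h1, h2, h3, Fin.castAdd, Fin.castLE]
    intro h5; omega
  · by_cases h2 : j + 1 = p
    · have h3 : j < p := by omega
      by_cases h4 : j + 1 < n <;>
      simp [h1, h2, h3, h4, Fin.castAdd, Fin.castLE] <;> subst h2 <;> simp [h4, hj']
    · have h3 : ¬ j < p := by omega
      by_cases h4 : j + 1 < n <;> simp [h1, h2, h3, h4]

theorem face2 (φ : G →* G) (n : ℕ) (p : Fin (n + 1)) (x : Fin (n + 1) → M × G) (j : Fin n) :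
    ((if (j : ℕ) < (p : ℕ) then under φ (x j.castSucc) (x p) else overOp φ (x j.succ) (x p)).1 -
      if h : (j : ℕ) + 1 < n then
        (if (j : ℕ) + 1 < (p : ℕ) then under φ (x (Fin.castSucc ⟨(j : ℕ) + 1, h⟩)) (x p)
          else overOp φ (x (Fin.succ ⟨(j : ℕ) + 1, h⟩)) (x p)).1 else 0) =
    dMconj φ n p (fun j => (x j).2)
      (fun j => (x j).1 - if h : (j : ℕ) + 1 < n + 1 then (x ⟨(j : ℕ) + 1, h⟩).1 else 0) j := by
  obtain ⟨j, hj⟩ := j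
  obtain ⟨p, hp⟩ := p
  simp only [dMconj, Fin.castSucc, Fin.succ, Fin.castAdd, Fin.castLE]
  by_cases h1 : j + 1 < p
  · have h2 : j < p := by omega
    have h3 : j + 1 < n := by omega
    simp [h1, h2, h3, hj, under, ract_sub]
  · by_cases h2 : j + 1 = p
    · subst h2
      by_cases h4 : j + 1 < n <;>
      simp [h4, hj, under, overOp, ract_sub, ract_zero] <;> abel
    · have h3 : ¬ j < p := by omega
      by_cases h4 : j + 1 < n <;> simp [h1, h2, h3, h4, overOp, ract_sub, ract_zero]

/-- `γ = (γ_n)` is a chain map `C^{BR}_*(X;ℤ)_X → C^{BR_U}_*(X;ℤ)_X`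
(the `X`-set `X` versions), and each `γ_n` is an isomorphism of abelian groups. -/
theorem gammaX_chainMap_and_iso (hφ : ∀ g : G, φ g ∈ Subgroup.center G) :
    (∀ d : ℕ,
        (gammaMap (G := G) (M := M) (d + 1)).comp (dBRX φ d) =
          (dBRUX (M := M) φ d).comp (gammaMap (d + 2))) ∧
      (∀ n : ℕ, Function.Bijective (gammaMap (G := G) (M := M) n)) := by
  refine ⟨?_, gamma_bij⟩
  intro d
  cases d with
  | zero => simp [dBRX, dBRUX]
  | succ d =>
    apply FreeAbelianGroup.lift_ext
    intro x
    simp only [AddMonoidHom.comp_apply, gammaMap, dBRX, dBRUX, FreeAbelianGroup.lift_apply_of,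
      map_sum, map_zsmul, map_sub]
    refine Finset.sum_congr rfl fun i _ => ?_
    congr 1
    congr 1
    · congr 1
      refine Prod.ext rfl ?_
      funext j
      exact face1 (d + 2) i.succ (fun j => (x j).1) j
    · congr 1
      refine Prod.ext ?_ ?_
      · funext j
        simp only [dGconj, Fin.val_succ]
        split_ifs <;> rfl
      · funext j
        exact face2 φ (d + 2) i.succ x j

end GAlex
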